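/- (Oracle skeleton inclusions from principles P1 and P2.) Let G be a directed acyclic graph on V = 𝐗 ∪ 𝐘, unidirectional from 𝐗 to 𝐘. Then Edge(G_𝐗) ⊆ Edge(G_{𝐗|𝐘}) and Edge(G_{𝐘|𝐗}) ⊆ Edge(G_𝐘); consequently the edge density differences satisfy d(𝐗|𝐘) := edgeDens(G_{𝐗|𝐘}) − edgeDens(G_𝐗) ≥ 0 and d(𝐘|𝐗) := edgeDens(G_{𝐘|𝐗}) − edgeDens(G_𝐘) ≤ 0. -/

import Mathlib

open MeasureTheory ProbabilityTheory

namespace VecCI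

variable {V : Type*}

/-- Undirected adjacency of the edge relation `E`. -/
def Adj (E : V → V → Prop) (u v : V) : Prop := E u v ∨ E v u

/-- `p` is a path from `a` to `b`: a list of pairwise distinct vertices, starting at `a`,
ending at `b`, with at least two vertices, consecutive vertices being adjacent. -/
def IsPath (E : V → V → Prop) (p : List V) (a b : V) : Prop :=
  p.Nodup ∧ 2 ≤ p.length ∧ p.head? = some a ∧ p.getLast? = some b ∧ p.Chain' (Adj E)

/-- Index `i` is an interior position of the path `p`. -/
def Interior (p : List V) (i : ℕ) : Prop := 0 < i ∧ i + 1 < p.length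

/-- The vertex at interior position `i` of `p` is a collider: both adjacent edges point into it. -/
def ColliderAt (E : V → V → Prop) (p : List V) (i : ℕ) : Prop :=
  Interior p i ∧
    ∃ u v w, p[i - 1]? = some u ∧ p[i]? = some v ∧ p[i + 1]? = some w ∧ E u v ∧ E w v

/-- The vertex at interior position `i` of `p` is a non-collider. -/
def NonColliderAt (E : V → V → Prop) (p : List V) (i : ℕ) : Prop :=
  Interior p i ∧ ¬ ColliderAt E p i

/-- `d` is a descendant of `c`: `d = c` or there is a directed path from `c` to `d`. -/
def Descendant (E : V → V → Prop) (c d : V) : Prop := Relation.ReflTransGen E c d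

/-- A set `S` blocks a path `p` if some interior non-collider of `p` lies in `S`, or some
collider of `p` has no descendant in `S`. -/
def Blocked (E : V → V → Prop) (S : Set V) (p : List V) : Prop :=
  (∃ i v, NonColliderAt E p i ∧ p[i]? = some v ∧ v ∈ S) ∨
  (∃ i v, ColliderAt E p i ∧ p[i]? = some v ∧ ∀ d, Descendant E v d → d ∉ S)

/-- `S` d-separates `a` and `b`: every path between them is blocked by `S`. -/
def DSep (E : V → V → Prop) (S : Set V) (a b : V) : Prop :=
  ∀ p : List V, IsPath E p a b → Blocked E S p

/-- `E` admits no directed cycle. -/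
def Acyclic (E : V → V → Prop) : Prop := ∀ v, ¬ Relation.TransGen E v v

/-- `E` has no edge from `Ys` to `Xs`. -/
def Unidirectional (E : V → V → Prop) (Xs Ys : Set V) : Prop :=
  ∀ x ∈ Xs, ∀ y ∈ Ys, ¬ E y x


/-- The skeleton produced by an oracle PC algorithm run on the group `W`: the unordered
pair `{i, j}` of distinct vertices of `W` is an edge iff no `S ⊆ W \ {i, j}` d-separates
`i` and `j` in the full graph. -/
def EdgePlain (E : V → V → Prop) (W : Set V) : Set (Sym2 V) :=
  {e | ∃ i j : V, e = s(i, j) ∧ i ∈ W ∧ j ∈ W ∧ i ≠ j ∧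
    ∀ S : Set V, S ⊆ W \ {i, j} → ¬ DSep E S i j}

/-- The skeleton produced by an oracle PC algorithm run on the group `W` with the other
group `C` added to every conditioning set: `{i, j}` is an edge iff there is no
`S ⊆ W \ {i, j}` such that `S ∪ C` d-separates `i` and `j` in the full graph. -/
def EdgeCond (E : V → V → Prop) (W C : Set V) : Set (Sym2 V) :=
  {e | ∃ i j : V, e = s(i, j) ∧ i ∈ W ∧ j ∈ W ∧ i ≠ j ∧
    ∀ S : Set V, S ⊆ W \ {i, j} → ¬ DSep E (S ∪ C) i j}

/-- Edge density of an edge set `A` over a vertex group `W` with `n = |W|`: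
`|A| / (n (n − 1) / 2)`. -/
noncomputable def edgeDens (A : Set (Sym2 V)) (W : Set V) : ℝ :=
  (A.ncard : ℝ) / ((W.ncard : ℝ) * ((W.ncard : ℝ) - 1) / 2)

lemma isPath_adj {E : V → V → Prop} {p : List V} {a b : V} (h : IsPath E p a b)
    (i : ℕ) (hi : i + 1 < p.length) : Adj E (p[i]'(by omega)) p[i + 1] :=
  List.isChain_iff_getElem.mp h.2.2.2.2 i hi

lemma isPath_first {E : V → V → Prop} {p : List V} {a b : V} (h : IsPath E p a b)
    (h0 : 0 < p.length) : p[0] = a := by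
  have := h.2.2.1
  rw [List.head?_eq_getElem?, List.getElem?_eq_getElem h0] at this
  exact Option.some.inj this

lemma isPath_last {E : V → V → Prop} {p : List V} {a b : V} (h : IsPath E p a b)
    (i : ℕ) (hi : i < p.length) (hl : ¬ i + 1 < p.length) : p[i] = b := by
  have := h.2.2.2.1
  have e : p.length - 1 = i := by omega
  rw [List.getLast?_eq_getElem?, e, List.getElem?_eq_getElem hi] at this
  exact Option.some.inj this

/-- On a path, going from outside `P` into `P` happens at some first index. -/
lemma first_entry {p : List V} (P : Set V) (h0 : ∀ h : 0 < p.length, p[0] ∉ P)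
    (i : ℕ) (hi : i < p.length) (hP : p[i] ∈ P) :
    ∃ k, ∃ hk : k + 1 < p.length, p[k]'(by omega) ∉ P ∧ p[k + 1] ∈ P := by
  induction i with
  | zero => exact absurd hP (h0 hi)
  | succ n ih =>
    by_cases hn : p[n]'(by omega) ∈ P
    · exact ih (by omega) hn
    · exact ⟨n, hi, hn, hP⟩

lemma desc_mem {E : V → V → Prop} {Xs Ys : Set V} (hcover : Xs ∪ Ys = Set.univ)
    (huni : Unidirectional E Xs Ys) {c d : V} (hc : c ∈ Ys) (h : Descendant E c d) : d ∈ Ys := by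
  induction h with
  | refl => exact hc
  | @tail b c _ hbc ih =>
    have hm : c ∈ Xs ∪ Ys := by rw [hcover]; exact Set.mem_univ c
    rcases hm with hx | hy
    · exact absurd hbc (huni _ hx _ ih)
    · exact hy

/-- After an edge into a vertex of `Ys`, a path ending in `Xs` has a collider in `Ys`. -/
lemma exists_collider {E : V → V → Prop} {Xs Ys : Set V} (hcover : Xs ∪ Ys = Set.univ)
    (hdisj : Disjoint Xs Ys) (huni : Unidirectional E Xs Ys) {p : List V} {a b : V}
    (h : IsPath E p a b) (hb : b ∈ Xs) (n : ℕ) :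
    ∀ k, ∀ hk : k + 1 < p.length, p.length - k ≤ n → p[k + 1] ∈ Ys →
      E (p[k]'(by omega)) p[k + 1] →
      ∃ i v, ColliderAt E p i ∧ p[i]? = some v ∧ v ∈ Ys := by
  induction n with
  | zero => intro k hk hn; omega
  | succ n ih =>
    intro k hk hn hY hE
    by_cases hl : k + 2 < p.length
    · rcases isPath_adj h (k + 1) hl with h1 | h1
      · refine ih (k + 1) hl (by omega) ?_ h1
        exact desc_mem hcover huni hY (Relation.ReflTransGen.single h1)
      · refine ⟨k + 1, p[k + 1], ⟨⟨by omega, hl⟩, p[k]'(by omega), p[k + 1], p[k + 2], ?_, ?_, ?_, hE, h1⟩, ?_, hY⟩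
        · simp
        · simp
        · exact List.getElem?_eq_getElem hl
        · simp
    · have := isPath_last h (k + 1) hk hl
      exact absurd (this ▸ hY) (Set.disjoint_left.mp hdisj hb)

lemma dsep_plain_of_cond {E : V → V → Prop} {Xs Ys : Set V} (hcover : Xs ∪ Ys = Set.univ)
    (hdisj : Disjoint Xs Ys) (huni : Unidirectional E Xs Ys) {S : Set V} {a b : V}
    (ha : a ∈ Xs) (hb : b ∈ Xs) (hS : S ⊆ Xs) (h : DSep E (S ∪ Ys) a b) : DSep E S a b := by
  intro p hp
  by_cases hY : ∃ i, ∃ hi : i < p.length, p[i] ∈ Ys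
  · obtain ⟨i, hi, hiY⟩ := hY
    obtain ⟨k, hk, hkn, hkY⟩ := first_entry Ys
      (fun h0 => by rw [isPath_first hp h0]; exact Set.disjoint_left.mp hdisj ha) i hi hiY
    have hkX : p[k]'(by omega) ∈ Xs :=
      (hcover ▸ Set.mem_univ _ : p[k]'(by omega) ∈ Xs ∪ Ys).resolve_right hkn
    have hE := (isPath_adj hp k hk).resolve_right (huni _ hkX _ hkY)
    obtain ⟨j, v, hc, hv, hvY⟩ :=
      exists_collider hcover hdisj huni hp hb _ k hk le_rfl hkY hE
    exact Or.inr ⟨j, v, hc, hv, fun d hd hdS =>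
      Set.disjoint_left.mp hdisj (hS hdS) (desc_mem hcover huni hvY hd)⟩
  · rcases h p hp with ⟨i, v, hn, hv, hm⟩ | ⟨i, v, hc, hv, hd⟩
    · refine Or.inl ⟨i, v, hn, hv, hm.resolve_right fun hvY => hY ?_⟩
      obtain ⟨hi, e⟩ := List.getElem?_eq_some_iff.mp hv
      exact ⟨i, hi, e ▸ hvY⟩
    · exact Or.inr ⟨i, v, hc, hv, fun d hd' hdS => hd d hd' (Or.inl hdS)⟩

lemma dsep_cond_of_plain {E : V → V → Prop} {Xs Ys : Set V} (hcover : Xs ∪ Ys = Set.univ)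
    (hdisj : Disjoint Xs Ys) (huni : Unidirectional E Xs Ys) {S : Set V} {a b : V}
    (ha : a ∈ Ys) (hb : b ∈ Ys) (h : DSep E S a b) : DSep E (S ∪ Xs) a b := by
  intro p hp
  by_cases hX : ∃ i, ∃ hi : i < p.length, p[i] ∈ Xs
  · obtain ⟨i, hi, hiX⟩ := hX
    obtain ⟨k, hk, hkn, hkX⟩ := first_entry Xs
      (fun h0 => by rw [isPath_first hp h0]; exact Set.disjoint_right.mp hdisj ha) i hi hiX
    have hkY : p[k]'(by omega) ∈ Ys :=
      (hcover ▸ Set.mem_univ _ : p[k]'(by omega) ∈ Xs ∪ Ys).resolve_left hkn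
    have hl : k + 1 + 1 < p.length := by
      by_contra hl
      have := isPath_last hp (k + 1) hk hl
      exact Set.disjoint_left.mp hdisj hkX (this ▸ hb)
    refine Or.inl ⟨k + 1, p[k + 1], ⟨⟨by omega, hl⟩, ?_⟩, by simp, Or.inr hkX⟩
    rintro ⟨-, u, v, w, hu, hv, -, huv, -⟩
    obtain ⟨_, rfl⟩ := List.getElem?_eq_some_iff.mp hu
    obtain ⟨_, rfl⟩ := List.getElem?_eq_some_iff.mp hv
    exact huni _ hkX _ hkY huv
  · rcases h p hp with ⟨i, v, hn, hv, hm⟩ | ⟨i, v, hc, hv, hd⟩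
    · exact Or.inl ⟨i, v, hn, hv, Or.inl hm⟩
    · refine Or.inr ⟨i, v, hc, hv, fun d hd' => ?_⟩
      obtain ⟨hi, e⟩ := List.getElem?_eq_some_iff.mp hv
      have hvY : v ∈ Ys := (hcover ▸ Set.mem_univ v : v ∈ Xs ∪ Ys).resolve_left
        fun hvX => hX ⟨i, hi, e ▸ hvX⟩
      rintro (hdS | hdX)
      · exact hd d hd' hdS
      · exact Set.disjoint_left.mp hdisj hdX (desc_mem hcover huni hvY hd')

lemma edgeDens_mono [Finite V] {A B : Set (Sym2 V)} (W : Set V) (h : A ⊆ B) :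
    edgeDens A W ≤ edgeDens B W := by
  have hc : A.ncard ≤ B.ncard := Set.ncard_le_ncard h (Set.toFinite B)
  unfold edgeDens
  apply div_le_div_of_nonneg_right (by exact_mod_cast hc)
  rcases Nat.eq_zero_or_pos W.ncard with h0 | h0
  · simp [h0]
  · have : (1 : ℝ) ≤ W.ncard := by exact_mod_cast h0
    have : (0 : ℝ) ≤ (W.ncard : ℝ) - 1 := by linarith
    positivity

/-- oracle skeleton inclusions from principles P1 and P2:
`Edge(G_X) ⊆ Edge(G_{X|Y})` and `Edge(G_{Y|X}) ⊆ Edge(G_Y)`; consequently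
`d(X|Y) ≥ 0` and `d(Y|X) ≤ 0`. -/
theorem stmt_13 {V : Type*} [Fintype V] (E : V → V → Prop) (Xs Ys : Set V)
    (hcover : Xs ∪ Ys = Set.univ) (hdisj : Disjoint Xs Ys)
    (hXne : Xs.Nonempty) (hYne : Ys.Nonempty)
    (hirr : Irreflexive E) (hacyc : Acyclic E)
    (huni : Unidirectional E Xs Ys) :
    EdgePlain E Xs ⊆ EdgeCond E Xs Ys ∧
    EdgeCond E Ys Xs ⊆ EdgePlain E Ys ∧
    0 ≤ edgeDens (EdgeCond E Xs Ys) Xs - edgeDens (EdgePlain E Xs) Xs ∧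
    edgeDens (EdgeCond E Ys Xs) Ys - edgeDens (EdgePlain E Ys) Ys ≤ 0 := by
  have h1 : EdgePlain E Xs ⊆ EdgeCond E Xs Ys := by
    rintro e ⟨i, j, he, hi, hj, hij, H⟩
    exact ⟨i, j, he, hi, hj, hij, fun S hS hd => H S hS
      (dsep_plain_of_cond hcover hdisj huni hi hj (fun x hx => (hS hx).1) hd)⟩
  have h2 : EdgeCond E Ys Xs ⊆ EdgePlain E Ys := by
    rintro e ⟨i, j, he, hi, hj, hij, H⟩
    exact ⟨i, j, he, hi, hj, hij, fun S hS hd => H S hS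
      (dsep_cond_of_plain hcover hdisj huni hi hj hd)⟩
  exact ⟨h1, h2, sub_nonneg.mpr (edgeDens_mono Xs h1), sub_nonpos.mpr (edgeDens_mono Ys h2)⟩

end VecCI
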